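/- arXiv:1207.6717 — 2 statements merged into one kernel-verified Lean document; each statement's English description precedes it below -/
import Mathlib

section
/- Let W be a real random variable taking exactly two values a and b, with P(W = a) = q = 1 − P(W = b), satisfying E W = 0 and |a − b| ≤ 1. Then for any ζ ∈ [0,1], E[e^{ζW}] ≤ e^{ζ²·q}. -/
/-- For a two-valued random variable `W` with `P(W = a) = q = 1 - P(W = b)`,
mean zero and `|a - b| ≤ 1`, and any `ζ ∈ [0,1]`, one has `E e^{ζ W} ≤ e^{ζ² q}`.
The expectation over the two-point distribution is written out explicitly. -/
theorem mgf_two_point_bound (q a b ζ : ℝ)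
    (hq0 : 0 ≤ q) (hq1 : q ≤ 1)
    (hmean : q * a + (1 - q) * b = 0)
    (hab : |a - b| ≤ 1)
    (hζ0 : 0 ≤ ζ) (hζ1 : ζ ≤ 1) :
    q * Real.exp (ζ * a) + (1 - q) * Real.exp (ζ * b) ≤ Real.exp (ζ ^ 2 * q) := by
  obtain ⟨d, hd⟩ : ∃ d, d = a - b := ⟨_, rfl⟩
  have ha : a = (1 - q) * d := by rw [hd]; linarith
  have hb : b = -(q * d) := by rw [hd]; linarith
  rw [← hd] at hab
  have hq1' : 0 ≤ 1 - q := by linarith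
  have key : ∀ x : ℝ, |x| ≤ 1 → Real.exp x ≤ 1 + x + x ^ 2 := by
    intro x hx
    have h := (abs_le.mp (Real.abs_exp_sub_one_sub_id_le hx)).2
    linarith
  have haa : |a| ≤ 1 := by
    rw [ha, abs_mul, abs_of_nonneg hq1']
    exact mul_le_one₀ (by linarith) (abs_nonneg d) hab
  have hbb : |b| ≤ 1 := by
    rw [hb, abs_neg, abs_mul, abs_of_nonneg hq0]
    exact mul_le_one₀ hq1 (abs_nonneg d) hab
  have h1 := key (ζ * a) (by
    rw [abs_mul, abs_of_nonneg hζ0]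
    exact mul_le_one₀ hζ1 (abs_nonneg a) haa)
  have h2 := key (ζ * b) (by
    rw [abs_mul, abs_of_nonneg hζ0]
    exact mul_le_one₀ hζ1 (abs_nonneg b) hbb)
  have hd2 : d ^ 2 ≤ 1 := (sq_le_one_iff_abs_le_one d).mpr hab
  have hv : (1 - q) * d ^ 2 ≤ 1 := mul_le_one₀ (by linarith) (sq_nonneg d) hd2
  calc q * Real.exp (ζ * a) + (1 - q) * Real.exp (ζ * b)
      ≤ q * (1 + ζ * a + (ζ * a) ^ 2) + (1 - q) * (1 + ζ * b + (ζ * b) ^ 2) :=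
        add_le_add (mul_le_mul_of_nonneg_left h1 hq0) (mul_le_mul_of_nonneg_left h2 hq1')
    _ = 1 + ζ ^ 2 * q * ((1 - q) * d ^ 2) := by rw [ha, hb]; ring
    _ ≤ 1 + ζ ^ 2 * q := by
        have h := mul_le_mul_of_nonneg_left hv (mul_nonneg (sq_nonneg ζ) hq0)
        linarith
    _ ≤ Real.exp (ζ ^ 2 * q) := by
        have h := Real.add_one_le_exp (ζ ^ 2 * q)
        linarith
end

section
/- Let n be a positive integer, δ, η > 0, and let F be a graph on the vertex set V = {1,…,n} with more than (1−δ)·n²/4 edges such that for every W ⊆ V, the number of edges of F not in the cut ∇(W, V∖W) is greater than η·n². Then the number τ(F) of triangles in F satisfies τ(F) > (1/12)·(η − 3δ)·n³ − n². -/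
/-- The cut `∇_F(W, V ∖ W)`: edges of `F` with exactly one endpoint in `W`. -/
def cutEdges {n : ℕ} (F : SimpleGraph (Fin n)) (W : Set (Fin n)) : Set (Sym2 (Fin n)) :=
  {e | ∃ x y : Fin n, e = s(x, y) ∧ F.Adj x y ∧ x ∈ W ∧ y ∉ W}

open Classical in
lemma aux_edges {n : ℕ} (G : SimpleGraph (Fin n)) :
    ∑ x, ∑ y, (if G.Adj x y then (1:ℝ) else 0) = 2 * G.edgeSet.ncard := by
  have h := G.sum_degrees_eq_twice_card_edges
  have h2 : G.edgeSet.ncard = G.edgeFinset.card := by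
    rw [← SimpleGraph.coe_edgeFinset, Set.ncard_coe_finset]
  rw [h2]
  have h3 : (∑ v, (G.degree v : ℝ)) = 2 * (G.edgeFinset.card : ℝ) := by exact_mod_cast h
  rw [← h3]
  refine Finset.sum_congr rfl fun x _ => ?_
  rw [Finset.sum_boole, ← SimpleGraph.card_neighborFinset_eq_degree,
    SimpleGraph.neighborFinset_eq_filter]

/-- The graph of edges of `F` not in the cut of `W`. -/
def auxGraph {n : ℕ} (F : SimpleGraph (Fin n)) (W : Set (Fin n)) : SimpleGraph (Fin n) where
  Adj x y := F.Adj x y ∧ (x ∈ W ↔ y ∈ W)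
  symm := ⟨fun _ _ h => ⟨h.1.symm, h.2.symm⟩⟩
  loopless := ⟨fun _ h => F.irrefl h.1⟩

lemma aux_edgeSet {n : ℕ} (F : SimpleGraph (Fin n)) (W : Set (Fin n)) :
    (auxGraph F W).edgeSet = F.edgeSet \ cutEdges F W := by
  ext e
  induction e using Sym2.ind with
  | _ x y =>
    simp only [SimpleGraph.mem_edgeSet, auxGraph, Set.mem_sdiff, cutEdges, Set.mem_ofPred_eq]
    constructor
    · rintro ⟨h, hw⟩
      refine ⟨h, ?_⟩
      rintro ⟨a, b, he, hab, ha, hb⟩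
      rcases Sym2.eq_iff.1 he with ⟨rfl, rfl⟩ | ⟨rfl, rfl⟩ <;> tauto
    · rintro ⟨h, hw⟩
      refine ⟨h, ?_⟩
      by_contra hc
      by_cases hx : x ∈ W
      · exact hw ⟨x, y, rfl, h, hx, by tauto⟩
      · exact hw ⟨y, x, Sym2.eq_swap, h.symm, by tauto, hx⟩

open Classical in
lemma aux_tri {n : ℕ} (F : SimpleGraph (Fin n)) :
    ∑ v, ∑ x, ∑ y, (if F.Adj v x ∧ F.Adj v y ∧ F.Adj x y then (1:ℝ) else 0)
      ≤ 6 * (F.cliqueSet 3).ncard := by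
  have h2 : (F.cliqueSet 3).ncard = (F.cliqueFinset 3).card := by
    rw [← SimpleGraph.coe_cliqueFinset, Set.ncard_coe_finset]
  let S : Finset (Fin n × Fin n × Fin n) := Finset.univ.filter fun p =>
    F.Adj p.1 p.2.1 ∧ F.Adj p.1 p.2.2 ∧ F.Adj p.2.1 p.2.2
  have hS : S.card ≤ 6 * (F.cliqueFinset 3).card := by
    refine Finset.card_le_mul_card_image_of_maps_to (f := fun p => ({p.1, p.2.1, p.2.2} : Finset (Fin n)))
      ?_ 6 ?_
    · rintro ⟨a, b, c⟩ h
      simp only [S, Finset.mem_filter, Finset.mem_univ, true_and] at h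
      rw [SimpleGraph.mem_cliqueFinset_iff]
      exact SimpleGraph.is3Clique_triple_iff.2 h
    · intro t ht
      rw [SimpleGraph.mem_cliqueFinset_iff, SimpleGraph.is3Clique_iff] at ht
      obtain ⟨a, b, c, hab, hac, hbc, rfl⟩ := ht
      refine le_trans (Finset.card_le_card (t := {(a,b,c),(a,c,b),(b,a,c),(b,c,a),(c,a,b),(c,b,a)})
        ?_) Finset.card_le_six
      rintro ⟨x, y, z⟩ h
      simp only [S, Finset.mem_filter, Finset.mem_univ, true_and] at h
      obtain ⟨⟨h1, h2, h3⟩, he⟩ := h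
      have hx : x ∈ ({a, b, c} : Finset (Fin n)) := by rw [← he]; simp
      have hy : y ∈ ({a, b, c} : Finset (Fin n)) := by rw [← he]; simp
      have hz : z ∈ ({a, b, c} : Finset (Fin n)) := by rw [← he]; simp
      have := h1.ne
      have := h2.ne
      have := h3.ne
      simp only [Finset.mem_insert, Finset.mem_singleton, Prod.mk.injEq] at hx hy hz ⊢
      clear he
      grind
  have hS' : (S.card : ℝ) = ∑ v, ∑ x, ∑ y,
      (if F.Adj v x ∧ F.Adj v y ∧ F.Adj x y then (1:ℝ) else 0) := by
    rw [← Finset.sum_boole, Fintype.sum_prod_type]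
    refine Finset.sum_congr rfl fun x _ => ?_
    rw [Fintype.sum_prod_type]
  rw [← hS', h2]
  exact_mod_cast hS

open Classical in
theorem aux_main
    (n : ℕ) (hn : 0 < n) (δ η : ℝ) (hδ : δ > 0) (hη : η > 0)
    (F : SimpleGraph (Fin n))
    (hsize : (F.edgeSet.ncard : ℝ) > (1 - δ) * n ^ 2 / 4)
    (hcut : ∀ W : Set (Fin n),
      ((F.edgeSet \ cutEdges F W).ncard : ℝ) > η * n ^ 2) :
    (((F.cliqueSet 3).ncard : ℝ)) > (1 / 12) * (η - 3 * δ) * n ^ 3 - n ^ 2 := by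
  have hn' : (0:ℝ) < n := by exact_mod_cast hn
  set e : ℝ := (F.edgeSet.ncard : ℝ) with he
  set a : Fin n → Fin n → ℝ := fun x y => if F.Adj x y then 1 else 0 with ha
  have hsym : ∀ x y, a x y = a y x := fun x y => by simp only [ha, F.adj_comm]
  set d : Fin n → ℝ := fun x => ∑ y, a x y with hd
  have hE : ∑ x, d x = 2 * e := aux_edges F
  have hT := aux_tri F
  have hT' : ∑ v, ∑ x, ∑ y, a v x * a v y * a x y ≤ 6 * ((F.cliqueSet 3).ncard : ℝ) := by
    refine le_trans (le_of_eq ?_) hT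
    refine Finset.sum_congr rfl fun v _ => Finset.sum_congr rfl fun x _ =>
      Finset.sum_congr rfl fun y _ => ?_
    simp only [ha]
    split_ifs <;> simp_all
  have hv : ∀ v, 2 * (η * n ^ 2) < 2 * e - 2 * ∑ x, a v x * d x
      + 2 * ∑ x, ∑ y, a v x * a v y * a x y := by
    intro v
    have h1 := hcut {x | F.Adj v x}
    rw [← aux_edgeSet] at h1
    have h2 := aux_edges (auxGraph F {x | F.Adj v x})
    have h3 : ∑ x, ∑ y, (if (auxGraph F {x | F.Adj v x}).Adj x y then (1:ℝ) else 0)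
      = ∑ x, ∑ y, (a x y - a v x * a x y - a v y * a y x + 2 * (a v x * a v y * a x y)) := by
      refine Finset.sum_congr rfl fun x _ => Finset.sum_congr rfl fun y _ => ?_
      rw [hsym y x]
      simp only [ha, auxGraph, Set.mem_ofPred_eq]
      by_cases p : F.Adj x y <;> by_cases q : F.Adj v x <;> by_cases r : F.Adj v y <;>
        simp [p, q, r] <;> norm_num
    have h4 : ∑ x, ∑ y, a v y * a y x = ∑ x, a v x * d x := by
      rw [Finset.sum_comm]
      simp only [hd, Finset.mul_sum]
    have h5 : ∑ x, ∑ y, a v x * a x y = ∑ x, a v x * d x := by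
      simp only [hd, Finset.mul_sum]
    have h6 : ∑ x, ∑ y, a x y = 2 * e := hE
    simp only [Finset.sum_add_distrib, Finset.sum_sub_distrib, ← Finset.mul_sum] at h3
    simp only [Finset.mul_sum] at h3 h4 h5 h6 ⊢
    simp only [← Finset.mul_sum] at h3 h4 h5 h6 ⊢
    simp only [hd] at *
    linarith
  have hsum : ∑ v : Fin n, 2 * (η * n ^ 2) < ∑ v, (2 * e - 2 * ∑ x, a v x * d x
      + 2 * ∑ x, ∑ y, a v x * a v y * a x y) := by
    refine Finset.sum_lt_sum_of_nonempty ⟨⟨0, hn⟩, Finset.mem_univ _⟩ fun v _ => hv v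
  have hD : ∑ v, ∑ x, a v x * d x = ∑ x, d x ^ 2 := by
    rw [Finset.sum_comm]
    refine Finset.sum_congr rfl fun x _ => ?_
    rw [← Finset.sum_mul, sq]
    congr 1
    exact Finset.sum_congr rfl fun y _ => hsym y x
  rw [Finset.sum_add_distrib, Finset.sum_sub_distrib, ← Finset.mul_sum (f := fun v => ∑ x, a v x * d x),
    ← Finset.mul_sum (f := fun v => ∑ x, ∑ y, a v x * a v y * a x y), hD] at hsum
  simp only [Finset.sum_const, Finset.card_univ, Fintype.card_fin, nsmul_eq_mul] at hsum
  have hCS : (∑ x, d x) ^ 2 ≤ n * ∑ x, d x ^ 2 := by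
    simpa using sq_sum_le_card_mul_sum_sq (s := Finset.univ) (f := d)
  rw [hE] at hCS
  have he0 : 0 ≤ e := by positivity
  set D := ∑ x, d x ^ 2
  set T : ℝ := ((F.cliqueSet 3).ncard : ℝ)
  -- n * e - D ≤ δ n^3 / 4
  have hN : (n:ℝ) * e - D ≤ δ * n ^ 3 / 4 := by
    have : n * ((n:ℝ) * e - D) ≤ n * (δ * n ^ 3 / 4) := by
      rcases le_total e ((n:ℝ)^2/4) with h | h
      · have h1 : 4 * e * ((n:ℝ)^2/4 - e) ≤ 4 * e * (δ * n^2/4) :=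
          mul_le_mul_of_nonneg_left (by linarith) (by positivity)
        have h2 : 4 * e * (δ * n^2/4) ≤ 4 * ((n:ℝ)^2/4) * (δ * n^2/4) := by gcongr
        nlinarith
      · have h1 : 0 ≤ 4 * e * (e - (n:ℝ)^2/4) := mul_nonneg (by positivity) (by linarith)
        have h2 : 0 ≤ n * (δ * (n:ℝ) ^ 3 / 4) := by positivity
        nlinarith
    exact le_of_mul_le_mul_left this hn'
  have p1 : 0 < η * (n:ℝ)^3 := by positivity
  have p2 : 0 < δ * (n:ℝ)^3 := by positivity
  have p3 : 0 < (n:ℝ)^2 := by positivity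
  have p4 : (n:ℝ) * (2 * (η * n^2)) = 2 * (η * (n:ℝ)^3) := by ring
  have : 6 * T > η * n^3 - δ * n^3/4 := by nlinarith
  nlinarith

theorem many_triangles_of_dense_far_from_bipartite
    (n : ℕ) (hn : 0 < n) (δ η : ℝ) (hδ : δ > 0) (hη : η > 0)
    (F : SimpleGraph (Fin n))
    (hsize : (F.edgeSet.ncard : ℝ) > (1 - δ) * n ^ 2 / 4)
    (hcut : ∀ W : Set (Fin n),
      ((F.edgeSet \ cutEdges F W).ncard : ℝ) > η * n ^ 2) :
    (((F.cliqueSet 3).ncard : ℝ)) > (1 / 12) * (η - 3 * δ) * n ^ 3 - n ^ 2 :=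
  aux_main n hn δ η hδ hη F hsize hcut
end
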